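/- With the Lie-algebra setup below, let the bracket be [x₁,x₂] = λ₁x₁ + λ₂x₂ + λ₃x₃, [x₂,x₃] = ν₁x₁ + ν₂x₂ + ν₃x₃, [x₁,x₃] = (ν₂+λ₃)x₁ + (ν₃+λ₁)x₂ + (ν₁+λ₂)x₃, and assume it satisfies the Jacobi identity. Then the curvature components are: R(x₁,x₂,x₁,x₂) = −(1/4)(λ₁+ν₁+ν₃)² + (3/4)λ₃² + λ₁² + λ₂² + ν₂λ₃ + ν₂² + (1/2)λ₁λ₃ + (1/2)ν₃λ₃ − (1/2)λ₃ν₁; R(x₁,x₃,x₁,x₃) = (3/4)(λ₁+ν₃)² − (1/4)(λ₃−ν₁)² + (λ₃+ν₂)² + (λ₂+ν₁)² + (1/2)(λ₁+ν₃)(ν₁+λ₃) − λ₁ν₃; R(x₂,x₃,x₂,x₃) = −(1/4)λ₁² + λ₂² − (1/4)λ₃² + (3/4)ν₁² + ν₂² + (3/4)ν₃² + (1/2)λ₁(−ν₃+ν₁−λ₃) − (1/2)λ₃ν₃ + λ₂ν₁ − (1/2)ν₁λ₃ + (1/2)ν₁ν₃; R(x₁,x₂,x₂,x₃) = −λ₂λ₃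 + λ₁ν₁ + λ₁² + λ₁ν₃ + λ₃ν₃; R(x₁,x₂,x₁,x₃) = λ₂(λ₁+ν₁+ν₃) + λ₃(λ₁+λ₂+ν₁); R(x₁,x₃,x₃,x₂) = −λ₁ν₂ − ν₂ν₃ − λ₃ν₁ − ν₂λ₃ − ν₁ν₃ − ν₂ν₁. Moreover the Lee forms are θ₁ = 3(λ₁+λ₃+ν₂), θ₂ = 3(ν₂−λ₂), θ₃ = −3(λ₂+ν₁+ν₃), θ*₁ = (3/2)(λ₁+2λ₂+λ₃+ν₁+ν₃), θ*₂ = −(3/2)(λ₁+λ₃−ν₁−ν₃), θ*₃ = −(3/2)(λ₁+λ₃+ν₁+2ν₂+ν₃). -/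

import Mathlib

open scoped BigOperators

/-- The underlying vector space ℝ³. -/
abbrev V := Fin 3 → ℝ

/-- The standard basis `x₁, x₂, x₃` of ℝ³ (indexed from 0). -/
def e (i : Fin 3) : V := Pi.single i 1

/-- The standard inner product `g` on ℝ³ (the basis `e` is orthonormal). -/
def ip (x y : V) : ℝ := ∑ i, x i * y i

/-- The circulant structure `Q`: `Q x₁ = x₂`, `Q x₂ = x₃`, `Q x₃ = x₁`. -/
def Qv (x : V) : V := fun j => x (j - 1)

/-- The associated metric `g̃(y,z) = g(y,Qz) + g(Qy,z)`. -/
def gtil (x y : V) : ℝ := ip x (Qv y) + ip (Qv x) y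

/-- Bilinearity of a map `V → V → V`. -/
def Bilin (f : V → V → V) : Prop :=
  (∀ (a : ℝ) (x y z : V), f (a • x + y) z = a • f x z + f y z) ∧
  (∀ (a : ℝ) (x y z : V), f x (a • y + z) = a • f x y + f x z)

/-- Skew-symmetry of a map `V → V → V`. -/
def Skew (f : V → V → V) : Prop := ∀ x y, f x y = - f y x

/-- The Jacobi identity for a bracket. -/
def Jacobi (br : V → V → V) : Prop :=
  ∀ x y z, br x (br y z) + br y (br z x) + br z (br x y) = 0

/-- The Koszul formula determining the Levi-Civita connection `∇` of the
left-invariant metric `g` on the basis: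
`2g(∇_{xᵢ}xⱼ, xₖ) = g([xᵢ,xⱼ],xₖ) + g([xₖ,xᵢ],xⱼ) + g([xₖ,xⱼ],xᵢ)`. -/
def Koszul (br nabla : V → V → V) : Prop :=
  ∀ i j k : Fin 3, 2 * ip (nabla (e i) (e j)) (e k) =
    ip (br (e i) (e j)) (e k) + ip (br (e k) (e i)) (e j) + ip (br (e k) (e j)) (e i)

/-- The curvature operator `R(x,y)z = ∇ₓ∇_y z − ∇_y∇ₓz − ∇_{[x,y]}z`. -/
def Rop (br nabla : V → V → V) (x y z : V) : V :=
  nabla x (nabla y z) - nabla y (nabla x z) - nabla (br x y) z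

/-- The curvature tensor of type (0,4): `R(x,y,z,u) = g(R(x,y)z, u)`. -/
def Rten (br nabla : V → V → V) (x y z u : V) : ℝ := ip (Rop br nabla x y z) u

/-- The Ricci tensor `ρ(y,z) = Σᵢ R(xᵢ,y,z,xᵢ)`. -/
def ricci (br nabla : V → V → V) (y z : V) : ℝ := ∑ i, Rten br nabla (e i) y z (e i)

/-- The scalar curvature `τ = Σᵢ ρ(xᵢ,xᵢ)`. -/
def scalc (br nabla : V → V → V) : ℝ := ∑ i, ricci br nabla (e i) (e i)

/-- The fundamental tensor `F(x,y,z) = −g̃(∇ₓy, z) − g̃(y, ∇ₓz)`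
(the covariant derivative of `g̃`, which has constant components in this frame). -/
def Fop (nabla : V → V → V) (x y z : V) : ℝ := -(gtil (nabla x y) z) - gtil y (nabla x z)

/-- The Lee form `θₖ = Σᵢ F(xᵢ,xᵢ,xₖ)`. -/
def lee (nabla : V → V → V) (k : Fin 3) : ℝ := ∑ i, Fop nabla (e i) (e i) (e k)

/-- The Lee form `θ*ₖ = Σᵢ F(xᵢ,Qxᵢ,xₖ)`. -/
def leeStar (nabla : V → V → V) (k : Fin 3) : ℝ := ∑ i, Fop nabla (e i) (Qv (e i)) (e k)

/-!
In dimension three a skew bilinear bracket has the form `[x, y] = L (x × y)` for a matrix `L`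
(Milnor). Since the cyclic sum of `M x · (y × z)` is `tr M` times the volume form, the Koszul
formula becomes `∇ₓ y = (W x) × y` with `W = ½ tr(L) - Lᵀ`. By the Jacobi identity of the cross
product, the curvature operator is then the cross product with `W x × W y - W [x, y] = K (x × y)`,
where `K = adj(W)ᵀ - W L`, so the curvature components are the entries of `K` up to sign. The
Jacobi identity of the bracket says that `L` annihilates its own axial vector.

For the Lee forms, `Q + Qᵀ` is the all-ones matrix minus the identity, so with `s = (1, 1, 1)` we
have `g̃(y, z) = (s · y) (s · z) - y · z`, and the second term is parallel.
-/

open scoped Matrix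

section Matrices

variable {R : Type*} [CommRing R]

lemma sum_cyclic_mulVec_dotProduct_cross (M : Matrix (Fin 3) (Fin 3) R) (x y z : Fin 3 → R) :
    (M *ᵥ x) ⬝ᵥ (y ⨯₃ z) + (M *ᵥ y) ⬝ᵥ (z ⨯₃ x) + (M *ᵥ z) ⬝ᵥ (x ⨯₃ y) =
      M.trace * (x ⬝ᵥ (y ⨯₃ z)) := by
  simp only [cross_apply, Matrix.mulVec, dotProduct, Fin.sum_univ_three, Matrix.trace_fin_three,
    Matrix.cons_val]
  ring

lemma cross_dotProduct (x y z : Fin 3 → R) : (x ⨯₃ y) ⬝ᵥ z = x ⬝ᵥ (y ⨯₃ z) := by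
  rw [dotProduct_comm, triple_product_permutation]

lemma mulVec_cross_mulVec (M : Matrix (Fin 3) (Fin 3) R) (x y : Fin 3 → R) :
    (M *ᵥ x) ⨯₃ (M *ᵥ y) = M.adjugateᵀ *ᵥ (x ⨯₃ y) := by
  ext i
  fin_cases i <;>
    simp only [cross_apply, Matrix.mulVec, dotProduct, Fin.sum_univ_three, Fin.zero_eta, Fin.mk_one,
      Fin.reduceFinMk, Matrix.adjugate_fin_three, Matrix.transpose_apply, Matrix.of_apply,
      Matrix.cons_val] <;>
    ring

/-- The axial vector of the antisymmetric part of `M`: `(M - Mᵀ) x = axialVector M × x`. -/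
def axialVector (M : Matrix (Fin 3) (Fin 3) R) : Fin 3 → R :=
  ![M 2 1 - M 1 2, M 0 2 - M 2 0, M 1 0 - M 0 1]

end Matrices

section Frame

lemma e_zero_cross_e_one : e 0 ⨯₃ e 1 = e 2 := by
  ext i; fin_cases i <;> simp [cross_apply, e]

lemma e_one_cross_e_two : e 1 ⨯₃ e 2 = e 0 := by
  ext i; fin_cases i <;> simp [cross_apply, e]

lemma e_two_cross_e_zero : e 2 ⨯₃ e 0 = e 1 := by
  ext i; fin_cases i <;> simp [cross_apply, e]

lemma e_one_cross_e_zero : e 1 ⨯₃ e 0 = -e 2 := by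
  rw [← cross_anticomm, e_zero_cross_e_one]

lemma e_two_cross_e_one : e 2 ⨯₃ e 1 = -e 0 := by
  rw [← cross_anticomm, e_one_cross_e_two]

lemma e_zero_cross_e_two : e 0 ⨯₃ e 2 = -e 1 := by
  rw [← cross_anticomm, e_two_cross_e_zero]

lemma smul_e_add_smul_e_add_smul_e (a b c : ℝ) : a • e 0 + b • e 1 + c • e 2 = ![a, b, c] := by
  ext i; fin_cases i <;> simp [e]

lemma e_dotProduct_mulVec_e (M : Matrix (Fin 3) (Fin 3) ℝ) (i j : Fin 3) :
    e i ⬝ᵥ (M *ᵥ e j) = M i j := by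
  simp [e]

lemma sum_e_cross_mulVec_e (M : Matrix (Fin 3) (Fin 3) ℝ) :
    e 0 ⨯₃ (M *ᵥ e 0) + e 1 ⨯₃ (M *ᵥ e 1) + e 2 ⨯₃ (M *ᵥ e 2) = axialVector M := by
  ext i
  fin_cases i <;> simp [cross_apply, e, axialVector] <;> ring

lemma ip_eq_dotProduct (x y : V) : ip x y = x ⬝ᵥ y := rfl

end Frame

section Bilinear

variable {f : V → V → V}

/-- A bilinear map in the sense of `Bilin`, bundled. -/
def Bilin.toLinearMap₂ (hf : Bilin f) : V →ₗ[ℝ] V →ₗ[ℝ] V :=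
  LinearMap.mk₂ ℝ f
    (fun x y z ↦ by simpa using hf.1 1 x y z)
    (fun a x z ↦ by
      have h0 : f 0 z = 0 := by simpa using hf.1 1 0 0 z
      simpa [h0] using hf.1 a x 0 z)
    (fun x y z ↦ by simpa using hf.2 1 x y z)
    (fun a x y ↦ by
      have h0 : f x 0 = 0 := by simpa using hf.2 1 x 0 0
      simpa [h0] using hf.2 a x y 0)

lemma Bilin.eq_of_basis (hf : Bilin f) {B : V →ₗ[ℝ] V →ₗ[ℝ] V}
    (h : ∀ i j, f (e i) (e j) = B (e i) (e j)) (x y : V) : f x y = B x y := by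
  have : hf.toLinearMap₂ = B :=
    LinearMap.ext_basis (Pi.basisFun ℝ (Fin 3)) (Pi.basisFun ℝ (Fin 3)) fun i j ↦ by
      simpa [Bilin.toLinearMap₂, e] using h i j
  exact LinearMap.congr_fun₂ this x y

lemma Skew.apply_self (hf : Skew f) (x : V) : f x x = 0 :=
  self_eq_neg.mp (hf x x)

end Bilinear

section Bracket

variable {br : V → V → V}

/-- Milnor's matrix `L` of a skew bilinear bracket on `ℝ³`, determined by `[x, y] = L (x × y)`. -/
def bracketMatrix (br : V → V → V) : Matrix (Fin 3) (Fin 3) ℝ :=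
  (Matrix.of ![br (e 1) (e 2), br (e 2) (e 0), br (e 0) (e 1)])ᵀ

lemma bracket_eq_mulVec_cross (hbil : Bilin br) (hskew : Skew br) (x y : V) :
    br x y = bracketMatrix br *ᵥ (x ⨯₃ y) := by
  refine hbil.eq_of_basis (B := crossProduct.compr₂ (bracketMatrix br).mulVecLin) (fun i j ↦ ?_) x y
  have col : ∀ k, bracketMatrix br *ᵥ e k = ![br (e 1) (e 2), br (e 2) (e 0), br (e 0) (e 1)] k :=
    fun k ↦ by ext; simp [bracketMatrix, e]
  fin_cases i <;> fin_cases j <;>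
    simp [hskew.apply_self, hskew (e 1) (e 0), hskew (e 2) (e 1), hskew (e 0) (e 2),
      e_zero_cross_e_one, e_one_cross_e_two, e_two_cross_e_zero, e_one_cross_e_zero,
      e_two_cross_e_one, e_zero_cross_e_two, Matrix.mulVec_neg, col]

lemma Jacobi.mulVec_axialVector (hjac : Jacobi br) {L : Matrix (Fin 3) (Fin 3) ℝ}
    (hL : ∀ x y, br x y = L *ᵥ (x ⨯₃ y)) : L *ᵥ axialVector L = 0 := by
  have := hjac (e 0) (e 1) (e 2)
  simp only [hL, e_one_cross_e_two, e_two_cross_e_zero, e_zero_cross_e_one] at this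
  rwa [← Matrix.mulVec_add, ← Matrix.mulVec_add, sum_e_cross_mulVec_e] at this

end Bracket

section Connection

variable {br nabla : V → V → V} {L : Matrix (Fin 3) (Fin 3) ℝ}

/-- The matrix `W` of the Levi-Civita connection of the bracket `[x, y] = L (x × y)`, determined by
`∇ₓ y = (W x) × y`. -/
noncomputable def connectionMatrix (L : Matrix (Fin 3) (Fin 3) ℝ) : Matrix (Fin 3) (Fin 3) ℝ :=
  (L.trace / 2) • 1 - Lᵀ

lemma two_mul_connectionMatrix_cross_dotProduct (L : Matrix (Fin 3) (Fin 3) ℝ) (x y z : V) :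
    2 * (((connectionMatrix L *ᵥ x) ⨯₃ y) ⬝ᵥ z) =
      (L *ᵥ (x ⨯₃ y)) ⬝ᵥ z + (L *ᵥ (z ⨯₃ x)) ⬝ᵥ y + (L *ᵥ (z ⨯₃ y)) ⬝ᵥ x := by
  have cyclic := sum_cyclic_mulVec_dotProduct_cross Lᵀ x y z
  have adjoint (u v : V) : (L *ᵥ u) ⬝ᵥ v = (Lᵀ *ᵥ v) ⬝ᵥ u := by
    rw [dotProduct_comm, Matrix.dotProduct_mulVec, Matrix.mulVec_transpose]
  have swap : (Lᵀ *ᵥ x) ⬝ᵥ (z ⨯₃ y) = -((Lᵀ *ᵥ x) ⬝ᵥ (y ⨯₃ z)) := by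
    rw [← cross_anticomm, dotProduct_neg]
  have expand : ((connectionMatrix L *ᵥ x) ⨯₃ y) ⬝ᵥ z =
      L.trace / 2 * (x ⬝ᵥ (y ⨯₃ z)) - (Lᵀ *ᵥ x) ⬝ᵥ (y ⨯₃ z) := by
    rw [cross_dotProduct, connectionMatrix, Matrix.sub_mulVec, Matrix.smul_mulVec,
      Matrix.one_mulVec, sub_dotProduct, smul_dotProduct, smul_eq_mul]
  rw [Matrix.trace_transpose] at cyclic
  rw [expand, adjoint, adjoint, adjoint, swap]
  linear_combination -cyclic

lemma Koszul.eq_connectionMatrix_cross (hkos : Koszul br nabla) (hnbil : Bilin nabla)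
    (hL : ∀ x y, br x y = L *ᵥ (x ⨯₃ y)) (x y : V) :
    nabla x y = (connectionMatrix L *ᵥ x) ⨯₃ y := by
  refine hnbil.eq_of_basis (B := crossProduct ∘ₗ (connectionMatrix L).mulVecLin)
    (fun i j ↦ ?_) x y
  ext k
  have koszul := hkos i j k
  simp only [ip_eq_dotProduct, hL, ← two_mul_connectionMatrix_cross_dotProduct] at koszul
  simpa [e] using koszul

/-- The matrix `K` of the curvature of the bracket `[x, y] = L (x × y)`, determined by
`R(x, y) z = K (x × y) × z`. -/
noncomputable def curvatureMatrix (L : Matrix (Fin 3) (Fin 3) ℝ) : Matrix (Fin 3) (Fin 3) ℝ :=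
  (connectionMatrix L).adjugateᵀ - connectionMatrix L * L

lemma Rten_eq_dotProduct_curvatureMatrix (hL : ∀ x y, br x y = L *ᵥ (x ⨯₃ y))
    (hnabla : ∀ x y, nabla x y = (connectionMatrix L *ᵥ x) ⨯₃ y) (x y z u : V) :
    Rten br nabla x y z u = (z ⨯₃ u) ⬝ᵥ (curvatureMatrix L *ᵥ (x ⨯₃ y)) := by
  have Rop_eq : Rop br nabla x y z = (curvatureMatrix L *ᵥ (x ⨯₃ y)) ⨯₃ z := by
    simp only [Rop, hnabla, hL, curvatureMatrix, Matrix.sub_mulVec, ← mulVec_cross_mulVec,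
      ← Matrix.mulVec_mulVec, map_sub, LinearMap.sub_apply, cross_cross]
  rw [Rten, Rop_eq, ip_eq_dotProduct, cross_dotProduct, dotProduct_comm]

end Connection

section Lee

variable {nabla : V → V → V} {W : Matrix (Fin 3) (Fin 3) ℝ}

lemma Qv_e (i : Fin 3) : Qv (e i) = e (i + 1) := by
  ext j
  simp [Qv, e, Pi.single_apply, sub_eq_iff_eq_add]

lemma gtil_eq_mul_sub_dotProduct (x y : V) : gtil x y = (1 ⬝ᵥ x) * (1 ⬝ᵥ y) - x ⬝ᵥ y := by
  have pred : (0 : Fin 3) - 1 = 2 ∧ (1 : Fin 3) - 1 = 0 ∧ (2 : Fin 3) - 1 = 1 := by decide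
  simp only [gtil, ip, Qv, dotProduct, Fin.sum_univ_three, pred, Pi.one_apply]
  ring

lemma Fop_eq_neg_cross_dotProduct (hnabla : ∀ x y, nabla x y = (W *ᵥ x) ⨯₃ y) (x y z : V) :
    Fop nabla x y z =
      -(((1 ⨯₃ (W *ᵥ x)) ⬝ᵥ y) * (1 ⬝ᵥ z) + (1 ⬝ᵥ y) * ((1 ⨯₃ (W *ᵥ x)) ⬝ᵥ z)) := by
  have metric : ((W *ᵥ x) ⨯₃ y) ⬝ᵥ z + y ⬝ᵥ ((W *ᵥ x) ⨯₃ z) = 0 := by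
    rw [cross_dotProduct, triple_product_permutation y, ← dotProduct_add, cross_anticomm',
      dotProduct_zero]
  simp only [Fop, gtil_eq_mul_sub_dotProduct, hnabla, cross_dotProduct 1]
  linear_combination metric

lemma lee_eq_neg_sum_cross_col (hnabla : ∀ x y, nabla x y = (W *ᵥ x) ⨯₃ y) (k : Fin 3) :
    lee nabla k = -∑ i, ((1 ⨯₃ W.col i) i + (1 ⨯₃ W.col i) k) := by
  simp [lee, Fop_eq_neg_cross_dotProduct hnabla, e, Finset.sum_add_distrib, add_comm]

lemma leeStar_eq_neg_sum_cross_col (hnabla : ∀ x y, nabla x y = (W *ᵥ x) ⨯₃ y) (k : Fin 3) :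
    leeStar nabla k = -∑ i, ((1 ⨯₃ W.col i) (i + 1) + (1 ⨯₃ W.col i) k) := by
  simp only [leeStar, Fop_eq_neg_cross_dotProduct hnabla, Qv_e]
  simp [e, Finset.sum_add_distrib, add_comm]

end Lee

section Family

/-- The matrix `L` of the brackets `[x₁, x₂] = (l₁, l₂, l₃)`, `[x₂, x₃] = (n₁, n₂, n₃)`,
`[x₁, x₃] = (n₂ + l₃, n₃ + l₁, n₁ + l₂)`; the middle column is `[x₃, x₁]`, whence the signs. -/
def familyMatrix (l1 l2 l3 n1 n2 n3 : ℝ) : Matrix (Fin 3) (Fin 3) ℝ :=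
  !![n1, -(n2 + l3), l1;
     n2, -(n3 + l1), l2;
     n3, -(n1 + l2), l3]

variable {br : V → V → V} {l1 l2 l3 n1 n2 n3 : ℝ}

lemma bracketMatrix_eq_familyMatrix (hskew : Skew br)
    (h12 : br (e 0) (e 1) = l1 • e 0 + l2 • e 1 + l3 • e 2)
    (h23 : br (e 1) (e 2) = n1 • e 0 + n2 • e 1 + n3 • e 2)
    (h13 : br (e 0) (e 2) = (n2 + l3) • e 0 + (n3 + l1) • e 1 + (n1 + l2) • e 2) :
    bracketMatrix br = familyMatrix l1 l2 l3 n1 n2 n3 := by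
  ext i j
  fin_cases i <;> fin_cases j <;>
    simp [bracketMatrix, familyMatrix, hskew (e 2) (e 0), h12, h23, h13,
      smul_e_add_smul_e_add_smul_e]

lemma connectionMatrix_familyMatrix :
    connectionMatrix (familyMatrix l1 l2 l3 n1 n2 n3) =
      !![(n1 - n3 - l1 + l3) / 2 - n1, -n2, -n3;
         n2 + l3, (n1 - n3 - l1 + l3) / 2 + n3 + l1, n1 + l2;
         -l1, -l2, (n1 - n3 - l1 + l3) / 2 - l3] := by
  ext i j
  fin_cases i <;> fin_cases j <;>
    simp [connectionMatrix, familyMatrix, Matrix.trace_fin_three] <;> ring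

lemma familyMatrix_mulVec_axialVector :
    familyMatrix l1 l2 l3 n1 n2 n3 *ᵥ axialVector (familyMatrix l1 l2 l3 n1 n2 n3) =
      ![l1 * (2 * n2 + l3) - n1 * (n1 + 2 * l2) - (n2 + l3) * (l1 - n3),
        l2 * (2 * n2 + l3) - n2 * (n1 + 2 * l2) - (n3 + l1) * (l1 - n3),
        l3 * (2 * n2 + l3) - n3 * (n1 + 2 * l2) - (n1 + l2) * (l1 - n3)] := by
  ext i
  fin_cases i <;>
    simp only [familyMatrix, axialVector, Matrix.mulVec, dotProduct, Fin.sum_univ_three,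
      Fin.zero_eta, Fin.mk_one, Fin.reduceFinMk, Matrix.of_apply, Matrix.cons_val] <;>
    ring

end Family

/-- for the bracket `[x₁,x₂] = λ₁x₁ + λ₂x₂ + λ₃x₃`,
`[x₂,x₃] = ν₁x₁ + ν₂x₂ + ν₃x₃`, `[x₁,x₃] = (ν₂+λ₃)x₁ + (ν₃+λ₁)x₂ + (ν₁+λ₂)x₃`
satisfying the Jacobi identity, the curvature components and the Lee forms of
`(G, g, Q)` are given by the stated formulas. -/
theorem curvature_and_lee_forms_of_G
    (br : V → V → V) (hbil : Bilin br) (hskew : Skew br) (hjac : Jacobi br)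
    (nabla : V → V → V) (hnbil : Bilin nabla) (hkos : Koszul br nabla)
    (l1 l2 l3 n1 n2 n3 : ℝ)
    (h12 : br (e 0) (e 1) = l1 • e 0 + l2 • e 1 + l3 • e 2)
    (h23 : br (e 1) (e 2) = n1 • e 0 + n2 • e 1 + n3 • e 2)
    (h13 : br (e 0) (e 2) = (n2 + l3) • e 0 + (n3 + l1) • e 1 + (n1 + l2) • e 2) :
    -- curvature components
    (Rten br nabla (e 0) (e 1) (e 0) (e 1) =
      -(1/4) * (l1 + n1 + n3)^2 + (3/4) * l3^2 + l1^2 + l2^2 + n2*l3 + n2^2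
        + (1/2) * l1 * l3 + (1/2) * n3 * l3 - (1/2) * l3 * n1 ∧
     Rten br nabla (e 0) (e 2) (e 0) (e 2) =
      (3/4) * (l1 + n3)^2 - (1/4) * (l3 - n1)^2 + (l3 + n2)^2 + (l2 + n1)^2
        + (1/2) * (l1 + n3) * (n1 + l3) - l1 * n3 ∧
     Rten br nabla (e 1) (e 2) (e 1) (e 2) =
      -(1/4) * l1^2 + l2^2 - (1/4) * l3^2 + (3/4) * n1^2 + n2^2 + (3/4) * n3^2
        + (1/2) * l1 * (-n3 + n1 - l3) - (1/2) * l3 * n3 + l2 * n1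
        - (1/2) * n1 * l3 + (1/2) * n1 * n3 ∧
     Rten br nabla (e 0) (e 1) (e 1) (e 2) =
      -l2*l3 + l1*n1 + l1^2 + l1*n3 + l3*n3 ∧
     Rten br nabla (e 0) (e 1) (e 0) (e 2) =
      l2 * (l1 + n1 + n3) + l3 * (l1 + l2 + n1) ∧
     Rten br nabla (e 0) (e 2) (e 2) (e 1) =
      -l1*n2 - n2*n3 - l3*n1 - n2*l3 - n1*n3 - n2*n1) ∧
    -- Lee forms
    (lee nabla 0 = 3 * (l1 + l3 + n2) ∧
     lee nabla 1 = 3 * (n2 - l2) ∧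
     lee nabla 2 = -3 * (l2 + n1 + n3) ∧
     leeStar nabla 0 = (3/2) * (l1 + 2*l2 + l3 + n1 + n3) ∧
     leeStar nabla 1 = -(3/2) * (l1 + l3 - n1 - n3) ∧
     leeStar nabla 2 = -(3/2) * (l1 + l3 + n1 + 2*n2 + n3)) := by
  have hL : ∀ x y, br x y = familyMatrix l1 l2 l3 n1 n2 n3 *ᵥ (x ⨯₃ y) := by
    rw [← bracketMatrix_eq_familyMatrix hskew h12 h23 h13]
    exact bracket_eq_mulVec_cross hbil hskew
  have hnabla := hkos.eq_connectionMatrix_cross hnbil hL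
  have curvature := Rten_eq_dotProduct_curvatureMatrix hL hnabla
  have jacobi : l3 * (2 * n2 + l3) - n3 * (n1 + 2 * l2) - (n1 + l2) * (l1 - n3) = 0 :=
    congrFun (familyMatrix_mulVec_axialVector.symm.trans (hjac.mulVec_axialVector hL)) 2
  constructor
  · simp only [curvature, e_zero_cross_e_one, e_one_cross_e_two, e_zero_cross_e_two,
      e_two_cross_e_one, neg_dotProduct, dotProduct_neg, Matrix.mulVec_neg, neg_neg,
      e_dotProduct_mulVec_e]
    simp only [curvatureMatrix, connectionMatrix_familyMatrix, Matrix.adjugate_fin_three_of]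
    simp only [familyMatrix, Matrix.sub_apply, Matrix.transpose_apply, Matrix.mul_apply,
      Fin.sum_univ_three, Matrix.of_apply, Matrix.cons_val]
    exact ⟨by ring, by ring, by ring, by ring, by ring, by linear_combination jacobi⟩
  · simp only [lee_eq_neg_sum_cross_col hnabla, leeStar_eq_neg_sum_cross_col hnabla,
      connectionMatrix_familyMatrix, cross_apply, Fin.sum_univ_three, Matrix.col_apply,
      Matrix.of_apply, Matrix.cons_val, Pi.one_apply, Fin.reduceAdd]
    exact ⟨by ring, by ring, by ring, by ring, by ring, by ring⟩
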